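/- arXiv:2306.05839 — 5 statements merged into one kernel-verified Lean document; each statement's English description precedes it below -/
import Mathlib

section
/- Let n ≥ 2 and let M ⊂ ℝⁿ be a bounded open connected set with closure M̄. Let a : M̄ × ℝ → ℝ be C² with a(x,0) = 0 and ∂_μ a(x,μ) ≥ 0 for all (x,μ) ∈ M̄ × ℝ. Suppose there exist a C² function F : ℝ → ℝ and constants δ, ε > 0 with F(0) = 0, F'(μ) ≥ 0 for all μ ∈ ℝ, |F(μ)| ≥ δ|μ|^{1+ε} for all μ ∈ ℝ, and such that F(μ) ≤ a(x,μ) for all x ∈ M̄ and μ ≥ 0, while a(x,μ) ≤ F(μ) for all x ∈ M̄ and μ ≤ 0. Then for every h > 0 there exists a constant C_h > 0 such that every function u : M̄ → ℝ that is continuous on M̄, twice continuously differentiable on M, and satisfies −Δu(x) + a(x,u(x)) = 0 for all x ∈ M, obeys |u(x)| ≤ C_h for every x ∈ M with dist(x, ∂M) ≥ h. -/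
/-!
This is the Keller–Osserman interior bound. On the ball of radius `r` about `c` put
`ρ x = r² - ‖x - c‖²` and `q = 2 / ε`. If `u c > 0` and `K` is the maximum of `ρ ^ q * u`, attained
at `x`, then the barrier `K ρ ^ (-q)`, which blows up at the boundary, touches `u` from above at
`x`. Hence `δ u ^ (1 + ε) ≤ Δu ≤ Δ(K ρ ^ (-q)) ≤ A r² K ρ ^ (-q - 2)` at `x`. As `u = K ρ ^ (-q)`
there and `q (1 + ε) = q + 2`, the powers of `ρ` cancel and leave `K ^ ε ≤ A r² / δ`, a bound on
`u c ≤ K r ^ (-2 q)` that does not depend on `u`. The lower bound is the same statement for `-u`.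
-/

open Set Metric

/-- The Euclidean Laplacian `Δu(x) = ∑ i, ∂²u/∂xᵢ²(x)`. -/
noncomputable def lap {n : ℕ} (u : EuclideanSpace ℝ (Fin n) → ℝ)
    (x : EuclideanSpace ℝ (Fin n)) : ℝ :=
  ∑ i : Fin n,
    fderiv ℝ (fun y => fderiv ℝ u y (EuclideanSpace.single i 1)) x (EuclideanSpace.single i 1)

open Filter Topology InnerProductSpace Laplacian

section SecondDerivative

variable {E F : Type*} [NormedAddCommGroup E] [NormedSpace ℝ E]
  [NormedAddCommGroup F] [NormedSpace ℝ F] {f : E → F} {x : E}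

theorem differentiableAt_fderiv_of_contDiffAt_two (hf : ContDiffAt ℝ 2 f x) :
    DifferentiableAt ℝ (fderiv ℝ f) x :=
  (hf.fderiv_right (m := 1) (by norm_num)).differentiableAt one_ne_zero

theorem iteratedFDeriv_two_eq_fderiv_fderiv_apply (hf : ContDiffAt ℝ 2 f x) (v w : E) :
    iteratedFDeriv ℝ 2 f x ![v, w] = fderiv ℝ (fun y => fderiv ℝ f y w) x v := by
  rw [iteratedFDeriv_two_apply,
    fderiv_clm_apply (differentiableAt_fderiv_of_contDiffAt_two hf) (differentiableAt_const w)]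
  simp

theorem iteratedFDeriv_two_eq_deriv_deriv_line (hf : ContDiffAt ℝ 2 f x) (v : E) :
    iteratedFDeriv ℝ 2 f x ![v, v] = deriv (deriv fun t : ℝ => f (x + t • v)) 0 := by
  have hline (t : ℝ) : HasDerivAt (fun t : ℝ => x + t • v) v t := by
    simpa using ((hasDerivAt_id t).smul_const v).const_add x
  have hnear : ∀ᶠ t in 𝓝 (0 : ℝ), DifferentiableAt ℝ f (x + t • v) := by
    have hto : Tendsto (fun t : ℝ => x + t • v) (𝓝 0) (𝓝 x) := by
      simpa using (hline 0).continuousAt.tendsto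
    filter_upwards [hto.eventually (hf.eventually (by simp))] with t ht
      using ht.differentiableAt two_ne_zero
  have hderiv : deriv (fun t : ℝ => f (x + t • v)) =ᶠ[𝓝 0] fun t => fderiv ℝ f (x + t • v) v :=
    hnear.mono fun t ht => (ht.hasFDerivAt.comp_hasDerivAt t (hline t)).deriv
  have hf' : DifferentiableAt ℝ (fun y => fderiv ℝ f y v) x :=
    (differentiableAt_fderiv_of_contDiffAt_two hf).clm_apply (differentiableAt_const v)
  rw [iteratedFDeriv_two_eq_fderiv_fderiv_apply hf, hderiv.deriv_eq]
  exact hf'.lineDeriv_eq_fderiv.symm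

theorem deriv_deriv_nonpos_of_isLocalMax {g : ℝ → ℝ} {t : ℝ} (hg : ContinuousAt g t)
    (hmax : IsLocalMax g t) : deriv (deriv g) t ≤ 0 := by
  by_contra! hpos
  have hmin : IsLocalMin g t := isLocalMin_of_deriv_deriv_pos hpos hmax.deriv_eq_zero hg
  have hconst : g =ᶠ[𝓝 t] fun _ => g t := by
    filter_upwards [hmin, hmax] with s hle hge using le_antisymm hge hle
  simp [hconst.deriv.deriv_eq] at hpos

theorem deriv_deriv_rpow_const (t q : ℝ) :
    deriv (deriv fun t : ℝ => t ^ q) t = q * (q - 1) * t ^ (q - 2) := by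
  rw [Real.deriv_rpow_const', deriv_const_mul_field, Real.deriv_rpow_const]
  ring_nf

end SecondDerivative

section LaplacianCalculus

variable {E F : Type*} [NormedAddCommGroup E] [InnerProductSpace ℝ E] [FiniteDimensional ℝ E]
  [NormedAddCommGroup F] [NormedSpace ℝ F]

theorem laplacian_eq_sum_fderiv_fderiv {ι : Type*} [Fintype ι] {f : E → F} {x : E}
    (hf : ContDiffAt ℝ 2 f x) (b : OrthonormalBasis ι ℝ E) :
    Δ f x = ∑ i, fderiv ℝ (fun y => fderiv ℝ f y (b i)) x (b i) := by
  simp only [laplacian_eq_iteratedFDeriv_orthonormalBasis f b,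
    iteratedFDeriv_two_eq_fderiv_fderiv_apply hf]

theorem lap_eq_laplacian {n : ℕ} {u : EuclideanSpace ℝ (Fin n) → ℝ} {x : EuclideanSpace ℝ (Fin n)}
    (hu : ContDiffAt ℝ 2 u x) : lap u x = Δ u x := by
  simp only [lap, laplacian_eq_sum_fderiv_fderiv hu (EuclideanSpace.basisFun (Fin n) ℝ),
    EuclideanSpace.basisFun_apply]

theorem laplacian_nonpos_of_isLocalMax {f : E → ℝ} {x : E} (hf : ContDiffAt ℝ 2 f x)
    (hmax : IsLocalMax f x) : Δ f x ≤ 0 := by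
  rw [laplacian_eq_iteratedFDeriv_stdOrthonormalBasis]
  refine Finset.sum_nonpos fun i _ => ?_
  set v := stdOrthonormalBasis ℝ E i
  have hline : ContinuousAt (fun t : ℝ => x + t • v) 0 := by fun_prop
  have hx : x + (0 : ℝ) • v = x := by simp
  rw [iteratedFDeriv_two_eq_deriv_deriv_line hf]
  rw [← hx] at hf hmax
  exact deriv_deriv_nonpos_of_isLocalMax
    (ContinuousAt.comp' (f := fun t : ℝ => x + t • v) hf.continuousAt hline)
    (IsMaxFilter.comp_tendsto (g := fun t : ℝ => x + t • v) hmax hline.tendsto)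

theorem laplacian_le_laplacian_of_eventuallyLE {f g : E → ℝ} {x : E} (hf : ContDiffAt ℝ 2 f x)
    (hg : ContDiffAt ℝ 2 g x) (hle : f ≤ᶠ[𝓝 x] g) (heq : f x = g x) : Δ f x ≤ Δ g x := by
  have hmax : IsLocalMax (f - g) x := by
    filter_upwards [hle] with y hy
    simpa [heq] using hy
  have hsub : Δ (f - g) x ≤ 0 := laplacian_nonpos_of_isLocalMax (hf.sub hg) hmax
  rwa [hf.laplacian_sub hg, sub_nonpos] at hsub

theorem laplacian_comp {φ : ℝ → F} {g : E → ℝ} {x : E} (hφ : ContDiffAt ℝ 2 φ (g x))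
    (hg : ContDiffAt ℝ 2 g x) :
    Δ (φ ∘ g) x = ‖fderiv ℝ g x‖ ^ 2 • deriv (deriv φ) (g x) + Δ g x • deriv φ (g x) := by
  have hφ' : DifferentiableAt ℝ (deriv φ) (g x) :=
    (differentiableAt_fderiv_of_contDiffAt_two hφ).clm_apply (differentiableAt_const 1)
  have hgx : DifferentiableAt ℝ g x := hg.differentiableAt two_ne_zero
  have hchain (v : E) : (fun y => fderiv ℝ (φ ∘ g) y v) =ᶠ[𝓝 x]
      fun y => fderiv ℝ g y v • deriv φ (g y) := by
    filter_upwards [hg.eventually (by simp), hg.continuousAt.eventually (hφ.eventually (by simp))]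
      with y hgy hφy
    rw [fderiv_comp y (hφy.differentiableAt two_ne_zero) (hgy.differentiableAt two_ne_zero)]
    simp
  have hsecond (v : E) : fderiv ℝ (fun y => fderiv ℝ (φ ∘ g) y v) x v =
      fderiv ℝ g x v ^ 2 • deriv (deriv φ) (g x) +
        fderiv ℝ (fun y => fderiv ℝ g y v) x v • deriv φ (g x) := by
    have hg' : DifferentiableAt ℝ (fun y => fderiv ℝ g y v) x :=
      (differentiableAt_fderiv_of_contDiffAt_two hg).clm_apply (differentiableAt_const v)
    rw [(hchain v).fderiv_eq, fderiv_fun_smul hg' (hφ'.fun_comp' x hgx),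
      fderiv_fun_comp x hφ' hgx]
    simp [sq, smul_smul]
  let b := stdOrthonormalBasis ℝ E
  rw [laplacian_eq_sum_fderiv_fderiv (hφ.comp x hg) b, laplacian_eq_sum_fderiv_fderiv hg b,
    b.norm_dual, Finset.sum_smul, Finset.sum_smul, ← Finset.sum_add_distrib]
  exact Finset.sum_congr rfl fun i _ => hsecond (b i)

end LaplacianCalculus

section Barrier

/-- The function `r² - ‖x - c‖²`, for `0 ≤ r` positive exactly on the open ball of radius `r` about
`c`. Its negative powers are the barriers that blow up at the boundary of this ball. -/
def paraboloid {E : Type*} [NormedAddCommGroup E] (c : E) (r : ℝ) (x : E) : ℝ :=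
  r ^ 2 - ‖x - c‖ ^ 2

variable {E : Type*} [NormedAddCommGroup E] {c x : E} {r : ℝ}

theorem paraboloid_pos_of_mem_ball (hx : x ∈ ball c r) : 0 < paraboloid c r x := by
  rw [mem_ball, dist_eq_norm] at hx
  exact sub_pos.2 (pow_lt_pow_left₀ hx (norm_nonneg _) two_ne_zero)

theorem mem_ball_of_paraboloid_pos (hr : 0 ≤ r) (hx : 0 < paraboloid c r x) : x ∈ ball c r := by
  rw [mem_ball, dist_eq_norm]
  exact lt_of_pow_lt_pow_left₀ 2 hr (sub_pos.1 hx)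

theorem continuous_paraboloid (c : E) (r : ℝ) : Continuous (paraboloid c r) := by
  unfold paraboloid
  fun_prop

theorem paraboloid_nonneg_of_mem_closedBall (hx : x ∈ closedBall c r) : 0 ≤ paraboloid c r x := by
  rw [mem_closedBall, dist_eq_norm] at hx
  exact sub_nonneg.2 (pow_le_pow_left₀ (norm_nonneg _) hx 2)

theorem paraboloid_le (c x : E) (r : ℝ) : paraboloid c r x ≤ r ^ 2 :=
  sub_le_self _ (sq_nonneg _)

variable [InnerProductSpace ℝ E]

theorem contDiff_paraboloid (c : E) (r : ℝ) {n} : ContDiff ℝ n (paraboloid c r) :=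
  contDiff_const.sub ((contDiff_id.sub contDiff_const).norm_sq ℝ)

theorem fderiv_paraboloid (c : E) (r : ℝ) (x : E) :
    fderiv ℝ (paraboloid c r) x = -(2 • innerSL ℝ (x - c)) :=
  (((hasFDerivAt_id x).sub_const c).norm_sq.const_sub (r ^ 2)).fderiv

theorem norm_fderiv_paraboloid (c : E) (r : ℝ) (x : E) :
    ‖fderiv ℝ (paraboloid c r) x‖ = 2 * ‖x - c‖ := by
  rw [fderiv_paraboloid, norm_neg, ← Nat.cast_smul_eq_nsmul ℝ, norm_smul, innerSL_apply_norm]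
  simp

variable [FiniteDimensional ℝ E]

theorem laplacian_paraboloid (c : E) (r : ℝ) (x : E) :
    Δ (paraboloid c r) x = -(2 * Module.finrank ℝ E) := by
  have hfirst (v : E) : (fun y => fderiv ℝ (paraboloid c r) y v) =
      fun y => (-(2 : ℝ) • innerSL ℝ v) y + 2 * ⟪v, c⟫_ℝ := by
    ext y
    simp only [fderiv_paraboloid, map_sub, neg_apply, smul_apply, sub_apply, coe_innerSL_apply,
      real_inner_comm, nsmul_eq_mul, Nat.cast_ofNat, neg_smul, smul_eq_mul]
    ring
  have hsecond (v : E) :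
      fderiv ℝ (fun y => fderiv ℝ (paraboloid c r) y v) x v = -(2 * ‖v‖ ^ 2) := by
    rw [hfirst, fderiv_add_const, ContinuousLinearMap.fderiv]
    simp
  rw [laplacian_eq_sum_fderiv_fderiv (contDiff_paraboloid c r).contDiffAt (stdOrthonormalBasis ℝ E)]
  simp [hsecond, mul_comm]

/-- The constant `A` in the estimate `Δ(ρ ^ (-q)) ≤ A r² ρ ^ (-q - 2)` for the barrier with
`ρ x = r² - ‖x - c‖²` on a ball of radius `r` in dimension `d`. -/
noncomputable def barrierConst (d : ℕ) (q : ℝ) : ℝ :=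
  2 * q * (2 * (q + 1) + d)

theorem laplacian_paraboloid_rpow (hr : 0 < paraboloid c r x) (q : ℝ) :
    Δ (fun y => paraboloid c r y ^ (-q)) x =
      2 * q * paraboloid c r x ^ (-q - 2) *
        (2 * (q + 1) * ‖x - c‖ ^ 2 + Module.finrank ℝ E * paraboloid c r x) := by
  have hφ : ContDiffAt ℝ 2 (fun t : ℝ => t ^ (-q)) (paraboloid c r x) :=
    Real.contDiffAt_rpow_const_of_ne hr.ne'
  have hpow : paraboloid c r x ^ (-q - 1) = paraboloid c r x ^ (-q - 2) * paraboloid c r x := by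
    rw [← Real.rpow_add_one hr.ne']
    ring_nf
  calc Δ ((fun t : ℝ => t ^ (-q)) ∘ paraboloid c r) x
      = (2 * ‖x - c‖) ^ 2 * (-q * (-q - 1) * paraboloid c r x ^ (-q - 2)) +
          -(2 * Module.finrank ℝ E) * (-q * paraboloid c r x ^ (-q - 1)) := by
        rw [laplacian_comp hφ (contDiff_paraboloid c r).contDiffAt, norm_fderiv_paraboloid,
          laplacian_paraboloid, deriv_deriv_rpow_const, Real.deriv_rpow_const,
          smul_eq_mul, smul_eq_mul]
    _ = _ := by rw [hpow]; ring

theorem barrierConst_pos {q : ℝ} (hq : 0 < q) (d : ℕ) : 0 < barrierConst d q := by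
  unfold barrierConst
  positivity

theorem laplacian_paraboloid_rpow_le {q : ℝ} (hq : 0 ≤ q) (hx : x ∈ ball c r) :
    Δ (fun y => paraboloid c r y ^ (-q)) x ≤
      barrierConst (Module.finrank ℝ E) q * r ^ 2 * paraboloid c r x ^ (-q - 2) := by
  have hpos : 0 < paraboloid c r x := paraboloid_pos_of_mem_ball hx
  have hnorm : ‖x - c‖ ^ 2 ≤ r ^ 2 := sub_nonneg.1 hpos.le
  calc Δ (fun y => paraboloid c r y ^ (-q)) x
      = 2 * q * paraboloid c r x ^ (-q - 2) *
          (2 * (q + 1) * ‖x - c‖ ^ 2 + Module.finrank ℝ E * paraboloid c r x) :=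
        laplacian_paraboloid_rpow hpos q
    _ ≤ 2 * q * paraboloid c r x ^ (-q - 2) *
          (2 * (q + 1) * r ^ 2 + Module.finrank ℝ E * r ^ 2) := by
        gcongr
        exact paraboloid_le c x r
    _ = _ := by rw [barrierConst]; ring

theorem exists_touching_paraboloid_rpow {E : Type*} [NormedAddCommGroup E] [ProperSpace E]
    {u : E → ℝ} {c : E} {r q : ℝ} (hr : 0 < r) (hq : 0 < q)
    (hu : ContinuousOn u (closedBall c r)) (huc : 0 < u c) :
    ∃ K, (r ^ 2) ^ q * u c ≤ K ∧ ∃ x ∈ ball c r, u x = K * paraboloid c r x ^ (-q) ∧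
      ∀ y ∈ ball c r, u y ≤ K * paraboloid c r y ^ (-q) := by
  have hcont : ContinuousOn (fun y => paraboloid c r y ^ q * u y) (closedBall c r) := by
    refine ContinuousOn.mul (Continuous.continuousOn ?_) hu
    exact (continuous_paraboloid c r).rpow_const fun _ => Or.inr hq.le
  obtain ⟨x, hx, hmax⟩ := (isCompact_closedBall c r).exists_isMaxOn
    ⟨c, mem_closedBall_self hr.le⟩ hcont
  have hKc : (r ^ 2) ^ q * u c ≤ paraboloid c r x ^ q * u x := by
    simpa [paraboloid] using hmax (mem_closedBall_self hr.le)
  have hne : paraboloid c r x ≠ 0 := by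
    intro h0
    rw [h0, Real.zero_rpow hq.ne', zero_mul] at hKc
    exact hKc.not_gt (by positivity)
  have hxpos : 0 < paraboloid c r x :=
    (paraboloid_nonneg_of_mem_closedBall hx).lt_of_ne' hne
  refine ⟨_, hKc, x, mem_ball_of_paraboloid_pos hr.le hxpos, ?_, fun y hy => ?_⟩
  · rw [Real.rpow_neg hxpos.le]
    field_simp
  · have hypos := paraboloid_pos_of_mem_ball hy
    rw [Real.rpow_neg hypos.le, ← div_eq_mul_inv, le_div_iff₀ (by positivity), mul_comm]
    exact hmax (ball_subset_closedBall hy)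

theorem laplacian_le_of_touching_paraboloid_rpow {u : E → ℝ} {q K : ℝ} (hq : 0 ≤ q) (hK : 0 ≤ K)
    (hu : ContDiffAt ℝ 2 u x) (hx : x ∈ ball c r) (htouch : u x = K * paraboloid c r x ^ (-q))
    (hle : ∀ y ∈ ball c r, u y ≤ K * paraboloid c r y ^ (-q)) :
    Δ u x ≤
      K * (barrierConst (Module.finrank ℝ E) q * r ^ 2 * paraboloid c r x ^ (-q - 2)) := by
  have hbarrier : ContDiffAt ℝ 2 (fun y => paraboloid c r y ^ (-q)) x :=
    (contDiff_paraboloid c r).contDiffAt.rpow_const_of_ne (paraboloid_pos_of_mem_ball hx).ne'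
  calc Δ u x ≤ Δ (K • fun y => paraboloid c r y ^ (-q)) x :=
        laplacian_le_laplacian_of_eventuallyLE hu (hbarrier.const_smul K)
          (eventually_of_mem (isOpen_ball.mem_nhds hx) hle) htouch
    _ = K * Δ (fun y => paraboloid c r y ^ (-q)) x := laplacian_smul K hbarrier
    _ ≤ _ := by
        gcongr
        exact laplacian_paraboloid_rpow_le hq hx

theorem le_rpow_of_mul_rpow_le {A δ ε K t : ℝ} (hδ : 0 < δ) (hε : 0 < ε) (hK : 0 < K) (ht : 0 < t)
    (h : δ * (K * t ^ (-(2 / ε))) ^ (1 + ε) ≤ K * (A * t ^ (-(2 / ε) - 2))) :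
    K ≤ (A / δ) ^ (1 / ε) := by
  have hexp : -(2 / ε) * (1 + ε) = -(2 / ε) - 2 := by field_simp; ring
  rw [Real.mul_rpow hK.le (by positivity), ← Real.rpow_mul ht.le, hexp, Real.rpow_one_add' hK.le
    (by positivity)] at h
  have hKε : K ^ ε ≤ A / δ := by
    rw [le_div_iff₀ hδ]
    refine le_of_mul_le_mul_right ?_ (show 0 < K * t ^ (-(2 / ε) - 2) by positivity)
    linarith
  rw [one_div]
  exact (Real.le_rpow_inv_iff_of_pos hK.le ((Real.rpow_nonneg hK.le ε).trans hKε) hε).2 hKε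

theorem le_of_mul_rpow_le_laplacian {u : E → ℝ} {δ ε : ℝ} (hδ : 0 < δ) (hε : 0 < ε) (hr : 0 < r)
    (hcont : ContinuousOn u (closedBall c r)) (hu : ContDiffOn ℝ 2 u (ball c r))
    (hlap : ∀ x ∈ ball c r, 0 < u x → δ * u x ^ (1 + ε) ≤ Δ u x) :
    u c ≤ (barrierConst (Module.finrank ℝ E) (2 / ε) / (δ * r ^ 2)) ^ (1 / ε) := by
  set A := barrierConst (Module.finrank ℝ E) (2 / ε)
  have hA : 0 < A := barrierConst_pos (by positivity) _
  rcases le_or_gt (u c) 0 with hneg | hpos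
  · exact hneg.trans (by positivity)
  obtain ⟨K, hKc, x, hx, htouch, hle⟩ :=
    exists_touching_paraboloid_rpow hr (q := 2 / ε) (by positivity) hcont hpos
  have hρ : 0 < paraboloid c r x := paraboloid_pos_of_mem_ball hx
  have hK : 0 < K := lt_of_lt_of_le (by positivity) hKc
  have hΔ : Δ u x ≤ K * (A * r ^ 2 * paraboloid c r x ^ (-(2 / ε) - 2)) :=
    laplacian_le_of_touching_paraboloid_rpow (by positivity) hK.le
      (hu.contDiffAt (isOpen_ball.mem_nhds hx)) hx htouch hle
  have hux : 0 < u x := by rw [htouch]; positivity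
  have hKle : K ≤ (A * r ^ 2 / δ) ^ (1 / ε) :=
    le_rpow_of_mul_rpow_le hδ hε hK hρ (htouch ▸ (hlap x hx hux).trans hΔ)
  have hscale : (A * r ^ 2 / δ) ^ (1 / ε) = (r ^ 2) ^ (2 / ε) * (A / (δ * r ^ 2)) ^ (1 / ε) := by
    rw [show 2 / ε = 2 * (1 / ε) by ring, Real.rpow_mul (by positivity), Real.rpow_two,
      ← Real.mul_rpow (by positivity) (by positivity)]
    congr 1
    field_simp
  exact le_of_mul_le_mul_left (hKc.trans (hKle.trans_eq hscale)) (by positivity)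

theorem abs_le_of_mul_rpow_le_mul_laplacian {u : E → ℝ} {δ ε : ℝ} (hδ : 0 < δ) (hε : 0 < ε)
    (hr : 0 < r) (hcont : ContinuousOn u (closedBall c r)) (hu : ContDiffOn ℝ 2 u (ball c r))
    (hlap : ∀ x ∈ ball c r, δ * |u x| ^ (2 + ε) ≤ u x * Δ u x) :
    |u c| ≤ (barrierConst (Module.finrank ℝ E) (2 / ε) / (δ * r ^ 2)) ^ (1 / ε) := by
  have hcancel {v w : ℝ} (hv : 0 < v) (h : δ * |v| ^ (2 + ε) ≤ v * w) : δ * v ^ (1 + ε) ≤ w := by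
    rw [abs_of_pos hv, show 2 + ε = 1 + (1 + ε) by ring, Real.rpow_one_add' hv.le (by positivity),
      mul_left_comm] at h
    exact le_of_mul_le_mul_left h hv
  refine abs_le'.2 ⟨?_, ?_⟩
  · exact le_of_mul_rpow_le_laplacian hδ hε hr hcont hu fun x hx hpos => hcancel hpos (hlap x hx)
  · refine le_of_mul_rpow_le_laplacian (u := -u) hδ hε hr hcont.neg hu.neg fun x hx hpos =>
      hcancel hpos ?_
    simpa [laplacian_neg] using hlap x hx

end Barrier

theorem subset_of_isPreconnected_of_disjoint_frontier {X : Type*} [TopologicalSpace X] {s t : Set X}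
    (hs : IsPreconnected s) (hdisj : Disjoint s (frontier t)) (hst : (s ∩ t).Nonempty) : s ⊆ t := by
  have hcover : s ⊆ interior t ∪ interior tᶜ := by
    rw [← compl_frontier_eq_union_interior]
    exact hdisj.subset_compl_right
  have hmeet : (s ∩ interior t).Nonempty := by
    obtain ⟨x, hxs, hxt⟩ := hst
    exact ⟨x, hxs, (hcover hxs).resolve_right fun hx => interior_subset hx hxt⟩
  exact (hs.subset_left_of_subset_union isOpen_interior isOpen_interior
    (disjoint_compl_right.mono interior_subset interior_subset) hcover hmeet).trans interior_subset

theorem ball_subset_of_le_infDist_frontier {E : Type*} [SeminormedAddCommGroup E] [NormedSpace ℝ E]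
    {M : Set E} {x : E} {h : ℝ} (hx : x ∈ M) (hd : h ≤ infDist x (frontier M)) : ball x h ⊆ M := by
  rcases le_or_gt h 0 with hh | hh
  · simp [ball_eq_empty.2 hh]
  · exact subset_of_isPreconnected_of_disjoint_frontier (convex_ball x h).isPreconnected
      (disjoint_ball_infDist.mono_left (ball_subset_ball hd)) ⟨x, mem_ball_self hh, hx⟩

theorem abs_mul_abs_le_mul_of_monotone {F g : ℝ → ℝ} (hF : Monotone F) (hF0 : F 0 = 0)
    (hpos : ∀ μ, 0 ≤ μ → F μ ≤ g μ) (hneg : ∀ μ, μ ≤ 0 → g μ ≤ F μ) (μ : ℝ) :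
    |μ| * |F μ| ≤ μ * g μ := by
  rcases le_total 0 μ with hμ | hμ
  · rw [abs_of_nonneg hμ, abs_of_nonneg (hF0 ▸ hF hμ)]
    exact mul_le_mul_of_nonneg_left (hpos μ hμ) hμ
  · rw [abs_of_nonpos hμ, abs_of_nonpos (hF0 ▸ hF hμ), neg_mul_neg]
    exact mul_le_mul_of_nonpos_left (hneg μ hμ) hμ

theorem mul_abs_rpow_le_mul_of_monotone {F g : ℝ → ℝ} {δ ε : ℝ} (hε : 0 < ε) (hF : Monotone F)
    (hF0 : F 0 = 0) (hgrow : ∀ μ, δ * |μ| ^ (1 + ε) ≤ |F μ|) (hpos : ∀ μ, 0 ≤ μ → F μ ≤ g μ)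
    (hneg : ∀ μ, μ ≤ 0 → g μ ≤ F μ) (μ : ℝ) : δ * |μ| ^ (2 + ε) ≤ μ * g μ := by
  calc δ * |μ| ^ (2 + ε) = |μ| * (δ * |μ| ^ (1 + ε)) := by
        rw [show 2 + ε = 1 + (1 + ε) by ring,
          Real.rpow_one_add' (abs_nonneg μ) (by positivity), mul_left_comm]
    _ ≤ |μ| * |F μ| := mul_le_mul_of_nonneg_left (hgrow μ) (abs_nonneg μ)
    _ ≤ μ * g μ := abs_mul_abs_le_mul_of_monotone hF hF0 hpos hneg μ

theorem stmt_0_general {E : Type*} [NormedAddCommGroup E] [InnerProductSpace ℝ E]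
    [FiniteDimensional ℝ E] {δ ε h : ℝ} (hδ : 0 < δ) (hε : 0 < ε) (hh : 0 < h) :
    ∃ C : ℝ, 0 < C ∧ ∀ (M : Set E) (u : E → ℝ), ContDiffOn ℝ 2 u M →
      (∀ x ∈ M, δ * |u x| ^ (2 + ε) ≤ u x * Δ u x) →
      ∀ x ∈ M, h ≤ infDist x (frontier M) → |u x| ≤ C := by
  have hconst := barrierConst_pos (div_pos two_pos hε) (Module.finrank ℝ E)
  refine ⟨(barrierConst (Module.finrank ℝ E) (2 / ε) / (δ * (h / 2) ^ 2)) ^ (1 / ε), by positivity,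
    fun M u hu hlap x hx hd => ?_⟩
  have hball := (closedBall_subset_ball (half_lt_self hh)).trans
    (ball_subset_of_le_infDist_frontier hx hd)
  exact abs_le_of_mul_rpow_le_mul_laplacian hδ hε (half_pos hh) (hu.continuousOn.mono hball)
    (hu.mono (ball_subset_closedBall.trans hball))
    fun y hy => hlap y (hball (ball_subset_closedBall hy))

theorem stmt_0 (n : ℕ) (hn : 2 ≤ n) (M : Set (EuclideanSpace ℝ (Fin n)))
    (hMopen : IsOpen M) (hMbdd : Bornology.IsBounded M) (hMconn : IsConnected M)
    (a : EuclideanSpace ℝ (Fin n) × ℝ → ℝ)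
    (ha : ContDiffOn ℝ 2 a (closure M ×ˢ (univ : Set ℝ)))
    (ha0 : ∀ x ∈ closure M, a (x, 0) = 0)
    (hamono : ∀ x ∈ closure M, ∀ μ : ℝ, 0 ≤ deriv (fun t => a (x, t)) μ)
    (F : ℝ → ℝ) (δ ε : ℝ) (hδ : 0 < δ) (hε : 0 < ε)
    (hF : ContDiff ℝ 2 F) (hF0 : F 0 = 0)
    (hFmono : ∀ μ : ℝ, 0 ≤ deriv F μ)
    (hFgrow : ∀ μ : ℝ, δ * |μ| ^ (1 + ε) ≤ |F μ|)
    (hlow : ∀ x ∈ closure M, ∀ μ : ℝ, 0 ≤ μ → F μ ≤ a (x, μ))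
    (hupp : ∀ x ∈ closure M, ∀ μ : ℝ, μ ≤ 0 → a (x, μ) ≤ F μ) :
    ∀ h : ℝ, 0 < h → ∃ C : ℝ, 0 < C ∧
      ∀ u : EuclideanSpace ℝ (Fin n) → ℝ,
        ContinuousOn u (closure M) → ContDiffOn ℝ 2 u M →
        (∀ x ∈ M, -lap u x + a (x, u x) = 0) →
        ∀ x ∈ M, h ≤ Metric.infDist x (frontier M) → |u x| ≤ C := by
  intro h hh
  have hFmonotone := monotone_of_deriv_nonneg (hF.differentiable two_ne_zero) hFmono
  obtain ⟨C, hC, hbound⟩ := stmt_0_general (E := EuclideanSpace ℝ (Fin n)) hδ hε hh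
  refine ⟨C, hC, fun u _ hu heq => hbound M u hu fun x hx => ?_⟩
  rw [← lap_eq_laplacian (hu.contDiffAt (hMopen.mem_nhds hx)), neg_add_eq_zero.1 (heq x hx)]
  exact mul_abs_rpow_le_mul_of_monotone hε hFmonotone hF0 hFgrow (hlow x (subset_closure hx))
    (hupp x (subset_closure hx)) (u x)
end

section
/- Let n ≥ 2 be an integer and let F : ℝ → ℝ be C² with F(0) = 0, F'(μ) ≥ 0 for all μ ∈ ℝ, and |F(μ)| ≥ δ|μ|^{1+ε} for all μ ∈ ℝ, for some δ, ε > 0. Then there exists a constant C > 0, depending only on n, δ, ε and F, with the following property: for every function v : [0,1] → ℝ that is continuously differentiable on [0,1] and twice continuously differentiable on (0,1), satisfying v'(0) = 0, v''(r) + ((n−1)/r) v'(r) = F(v(r)) for all r ∈ (0,1), v(r) ≥ 0 for all r ∈ [0,1], and v'(r) ≥ 0 for all r ∈ [0,1], one has v(0) ≤ C. In particular the bound is independent of the boundary value v(1). -/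
open Set

/-!
For a radial function `u` in dimension `a + 1` the Laplacian is `u'' + a / r * u'`, and
`r ^ a * (u'' + a / r * u')` is the derivative of the flux `r ^ a * u'`. With `p = 2 / ε` the
Keller–Osserman barrier `w r = K * R ^ p * (R ^ 2 - r ^ 2) ^ (-p)` blows up at `R`, and since
`p * (1 + ε) = p + 2` it satisfies `w'' + a / r * w' ≤ δ * w ^ (1 + ε)` for a suitable `K`.
Let `v` satisfy the opposite inequality on a larger ball, and suppose `w 0 < v 0`. As long as
`w < v`, the flux of `v - w` is nondecreasing, so `v - w` is nondecreasing. Hence `v` stays above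
`w` up to `R`, which is impossible because `w` blows up there. So `v 0 ≤ w 0 = K * R ^ (-p)`, and
letting `R` increase to the radius of the larger ball gives the bound there.
-/

open Filter Topology

/-- Regularity class of radial profiles on the ball of radius `R`: `u` has derivatives `u'` and
`u''` on `(0, R)`, and `u`, `u'` are continuous up to the centre. Nothing is asked at `r = R`. -/
structure HasRadialDerivs (u u' u'' : ℝ → ℝ) (R : ℝ) : Prop where
  continuousOn : ContinuousOn u (Ico 0 R)
  continuousOn_deriv : ContinuousOn u' (Ico 0 R)
  hasDerivAt : ∀ r ∈ Ioo 0 R, HasDerivAt u (u' r) r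
  hasDerivAt_deriv : ∀ r ∈ Ioo 0 R, HasDerivAt u' (u'' r) r

namespace HasRadialDerivs

variable {u u' u'' v v' v'' : ℝ → ℝ} {R ρ : ℝ}

lemma of_hasDerivWithinAt_Icc (hu : ∀ r ∈ Icc 0 R, HasDerivWithinAt u (u' r) (Icc 0 R) r)
    (hu'_cont : ContinuousOn u' (Icc 0 R)) (hu' : ∀ r ∈ Ioo 0 R, HasDerivAt u' (u'' r) r) :
    HasRadialDerivs u u' u'' R where
  continuousOn r hr :=
    (hu r (Ico_subset_Icc_self hr)).continuousWithinAt.mono Ico_subset_Icc_self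
  continuousOn_deriv := hu'_cont.mono Ico_subset_Icc_self
  hasDerivAt r hr := (hu r (Ioo_subset_Icc_self hr)).hasDerivAt (Icc_mem_nhds hr.1 hr.2)
  hasDerivAt_deriv := hu'

lemma mono (hu : HasRadialDerivs u u' u'' R) (hρ : ρ ≤ R) : HasRadialDerivs u u' u'' ρ where
  continuousOn := hu.continuousOn.mono (Ico_subset_Ico_right hρ)
  continuousOn_deriv := hu.continuousOn_deriv.mono (Ico_subset_Ico_right hρ)
  hasDerivAt r hr := hu.hasDerivAt r (Ioo_subset_Ioo_right hρ hr)
  hasDerivAt_deriv r hr := hu.hasDerivAt_deriv r (Ioo_subset_Ioo_right hρ hr)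

lemma sub (hu : HasRadialDerivs u u' u'' R) (hv : HasRadialDerivs v v' v'' R) :
    HasRadialDerivs (u - v) (u' - v') (u'' - v'') R where
  continuousOn := hu.continuousOn.sub hv.continuousOn
  continuousOn_deriv := hu.continuousOn_deriv.sub hv.continuousOn_deriv
  hasDerivAt r hr := (hu.hasDerivAt r hr).sub (hv.hasDerivAt r hr)
  hasDerivAt_deriv r hr := (hu.hasDerivAt_deriv r hr).sub (hv.hasDerivAt_deriv r hr)

lemma const_mul (c : ℝ) (hu : HasRadialDerivs u u' u'' R) :
    HasRadialDerivs (fun r ↦ c * u r) (fun r ↦ c * u' r) (fun r ↦ c * u'' r) R where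
  continuousOn := continuousOn_const.mul hu.continuousOn
  continuousOn_deriv := continuousOn_const.mul hu.continuousOn_deriv
  hasDerivAt r hr := (hu.hasDerivAt r hr).const_mul c
  hasDerivAt_deriv r hr := (hu.hasDerivAt_deriv r hr).const_mul c

end HasRadialDerivs

lemma hasDerivAt_rpow_mul (a : ℝ) {g : ℝ → ℝ} {g' r : ℝ} (hr : 0 < r) (hg : HasDerivAt g g' r) :
    HasDerivAt (fun x ↦ x ^ a * g x) (r ^ a * (g' + a / r * g r)) r := by
  refine ((Real.hasDerivAt_rpow_const (Or.inl hr.ne')).mul hg).congr_deriv ?_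
  rw [Real.rpow_sub_one hr.ne']
  ring

lemma nonneg_of_deriv_add_div_mul_nonneg {a ρ : ℝ} (ha : 0 ≤ a) {g g' : ℝ → ℝ}
    (hg : ContinuousOn g (Icc 0 ρ)) (hg' : ∀ r ∈ Ioo 0 ρ, HasDerivAt g (g' r) r)
    (hg0 : 0 ≤ g 0) (hnonneg : ∀ r ∈ Ioo 0 ρ, 0 ≤ g' r + a / r * g r) :
    ∀ r ∈ Icc 0 ρ, 0 ≤ g r := by
  intro r hr
  obtain rfl | hr0 := hr.1.eq_or_lt
  · exact hg0
  have hflux : MonotoneOn (fun x ↦ x ^ a * g x) (Icc 0 ρ) := by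
    refine monotoneOn_of_hasDerivWithinAt_nonneg (f' := fun x ↦ x ^ a * (g' x + a / x * g x))
      (convex_Icc 0 ρ) ((Real.continuous_rpow_const ha).continuousOn.mul hg) ?_ ?_ <;>
      rw [interior_Icc] <;> intro x hx
    · exact (hasDerivAt_rpow_mul a hx.1 (hg' x hx)).hasDerivWithinAt
    · exact mul_nonneg (Real.rpow_nonneg hx.1.le a) (hnonneg x hx)
  have hflux_nonneg : 0 ≤ r ^ a * g r :=
    (mul_nonneg (Real.rpow_nonneg le_rfl a) hg0).trans
      (hflux (left_mem_Icc.2 (hr.1.trans hr.2)) hr hr.1)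
  exact nonneg_of_mul_nonneg_right hflux_nonneg (Real.rpow_pos_of_pos hr0 a)

namespace HasRadialDerivs

variable {a R : ℝ} {u u' u'' v v' v'' w w' w'' : ℝ → ℝ}

lemma monotoneOn_of_radial_laplacian_nonneg {ρ : ℝ} (hu : HasRadialDerivs u u' u'' R)
    (ha : 0 ≤ a) (hρ : ρ < R) (hu'0 : 0 ≤ u' 0) (hLu : ∀ r ∈ Ioo 0 ρ, 0 ≤ u'' r + a / r * u' r) :
    MonotoneOn u (Icc 0 ρ) := by
  have hIcc : Icc 0 ρ ⊆ Ico 0 R := Icc_subset_Ico_right hρ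
  have hIoo : Ioo 0 ρ ⊆ Ioo 0 R := Ioo_subset_Ioo_right hρ.le
  have hu'_nonneg := nonneg_of_deriv_add_div_mul_nonneg ha (hu.continuousOn_deriv.mono hIcc)
    (fun r hr ↦ hu.hasDerivAt_deriv r (hIoo hr)) hu'0 hLu
  refine monotoneOn_of_hasDerivWithinAt_nonneg (f' := u') (convex_Icc 0 ρ)
    (hu.continuousOn.mono hIcc) ?_ ?_ <;> rw [interior_Icc] <;> intro r hr
  · exact (hu.hasDerivAt r (hIoo hr)).hasDerivWithinAt
  · exact hu'_nonneg r (Ioo_subset_Icc_self hr)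

lemma apply_zero_le_of_radial_laplacian_nonneg_of_pos (hu : HasRadialDerivs u u' u'' R)
    (ha : 0 ≤ a) (hu0 : 0 < u 0) (hu'0 : 0 ≤ u' 0)
    (hLu : ∀ r ∈ Ioo 0 R, 0 < u r → 0 ≤ u'' r + a / r * u' r) :
    ∀ r ∈ Ico 0 R, u 0 ≤ u r := by
  have apply_zero_le_of_pos : ∀ ρ ∈ Ico 0 R, (∀ r ∈ Ioo 0 ρ, 0 < u r) → u 0 ≤ u ρ := by
    intro ρ hρ hpos
    exact hu.monotoneOn_of_radial_laplacian_nonneg ha hρ.2 hu'0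
      (fun r hr ↦ hLu r (Ioo_subset_Ioo_right hρ.2.le hr) (hpos r hr))
      (left_mem_Icc.2 hρ.1) (right_mem_Icc.2 hρ.1) hρ.1
  have hpos : ∀ r ∈ Ico 0 R, 0 < u r := by
    by_contra! ⟨r, hr, hur⟩
    have hcompact : IsCompact (Icc 0 r ∩ u ⁻¹' Iic 0) :=
      isCompact_Icc.of_isClosed_subset
        ((hu.continuousOn.mono (Icc_subset_Ico_right hr.2)).preimage_isClosed_of_isClosed
          isClosed_Icc isClosed_Iic) inter_subset_left
    obtain ⟨ρ, ⟨hρ, huρ⟩, hρ_min⟩ := hcompact.exists_isLeast ⟨r, right_mem_Icc.2 hr.1, hur⟩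
    refine (hu0.trans_le (apply_zero_le_of_pos ρ ⟨hρ.1, hρ.2.trans_lt hr.2⟩
      fun s hs ↦ ?_)).not_ge huρ
    by_contra! hus
    exact (hρ_min ⟨⟨hs.1.le, hs.2.le.trans hρ.2⟩, hus⟩).not_gt hs.2
  exact fun r hr ↦ apply_zero_le_of_pos r hr fun s hs ↦ hpos s ⟨hs.1.le, hs.2.trans hr.2⟩

lemma sub_apply_zero_le_of_subsolution_of_supersolution {G : ℝ → ℝ}
    (hv : HasRadialDerivs v v' v'' R) (hw : HasRadialDerivs w w' w'' R) (ha : 0 ≤ a)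
    (hG : MonotoneOn G (Ici 0)) (hw_nonneg : ∀ r ∈ Ioo 0 R, 0 ≤ w r)
    (hv_sub : ∀ r ∈ Ioo 0 R, 0 ≤ v r → G (v r) ≤ v'' r + a / r * v' r)
    (hw_super : ∀ r ∈ Ioo 0 R, w'' r + a / r * w' r ≤ G (w r))
    (h0 : w 0 < v 0) (h'0 : w' 0 ≤ v' 0) :
    ∀ r ∈ Ico 0 R, v 0 - w 0 ≤ v r - w r := by
  refine (hv.sub hw).apply_zero_le_of_radial_laplacian_nonneg_of_pos ha (sub_pos.2 h0)
    (sub_nonneg.2 h'0) fun r hr hlt ↦ ?_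
  have hwv : w r ≤ v r := (sub_pos.1 hlt).le
  have hv_nonneg : 0 ≤ v r := (hw_nonneg r hr).trans hwv
  have hGwv : G (w r) ≤ G (v r) := hG (hw_nonneg r hr) hv_nonneg hwv
  simp only [Pi.sub_apply, mul_sub]
  linarith [hv_sub r hr hv_nonneg, hw_super r hr]

end HasRadialDerivs

/-- The function `(R² - r²)^(-q)`, out of which the barrier and its derivatives are built. It is
used for `|r| < R` only; elsewhere `Real.rpow` takes a junk value. -/
noncomputable def barrierProfile (q R r : ℝ) : ℝ := (R ^ 2 - r ^ 2) ^ (-q)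

section barrierProfile

variable {a q R r : ℝ}

lemma sq_sub_sq_pos_of_mem_Ico (hr : r ∈ Ico 0 R) : 0 < R ^ 2 - r ^ 2 :=
  sub_pos.2 (pow_lt_pow_left₀ hr.2 hr.1 two_ne_zero)

lemma barrierProfile_pos (q : ℝ) (hr : r ∈ Ico 0 R) : 0 < barrierProfile q R r :=
  Real.rpow_pos_of_pos (sq_sub_sq_pos_of_mem_Ico hr) _

lemma barrierProfile_zero_right (q : ℝ) (hR : 0 ≤ R) : barrierProfile q R 0 = R ^ (-(2 * q)) := by
  rw [barrierProfile, zero_pow two_ne_zero, sub_zero, ← Real.rpow_natCast_mul hR]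
  norm_num

lemma barrierProfile_eq_mul_add_one (q : ℝ) (hr : r ∈ Ico 0 R) :
    barrierProfile q R r = (R ^ 2 - r ^ 2) * barrierProfile (q + 1) R r := by
  have hsq := (sq_sub_sq_pos_of_mem_Ico hr).ne'
  rw [barrierProfile, barrierProfile, neg_add', Real.rpow_sub_one hsq, mul_div_cancel₀ _ hsq]

lemma barrierProfile_rpow (q s : ℝ) (hr : r ∈ Ico 0 R) :
    barrierProfile q R r ^ s = barrierProfile (q * s) R r := by
  rw [barrierProfile, barrierProfile, ← Real.rpow_mul (sq_sub_sq_pos_of_mem_Ico hr).le, neg_mul]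

lemma hasDerivAt_barrierProfile (q : ℝ) (hr : r ∈ Ico 0 R) :
    HasDerivAt (barrierProfile q R) (2 * q * r * barrierProfile (q + 1) R r) r := by
  have hsq : HasDerivAt (fun x ↦ R ^ 2 - x ^ 2) (-(2 * r)) r := by
    simpa using (hasDerivAt_pow 2 r).const_sub (R ^ 2)
  refine (hsq.rpow_const (Or.inl (sq_sub_sq_pos_of_mem_Ico hr).ne')).congr_deriv ?_
  rw [barrierProfile, neg_add']
  ring

lemma hasRadialDerivs_barrierProfile (q R : ℝ) :
    HasRadialDerivs (barrierProfile q R) (fun r ↦ 2 * q * r * barrierProfile (q + 1) R r)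
      (fun r ↦ 2 * q * (barrierProfile (q + 1) R r
        + 2 * (q + 1) * r ^ 2 * barrierProfile (q + 2) R r)) R where
  continuousOn _ hr := (hasDerivAt_barrierProfile q hr).continuousAt.continuousWithinAt
  continuousOn_deriv _ hr := ((continuousAt_const.mul continuousAt_id).mul
    (hasDerivAt_barrierProfile (q + 1) hr).continuousAt).continuousWithinAt
  hasDerivAt _ hr := hasDerivAt_barrierProfile q (Ioo_subset_Ico_self hr)
  hasDerivAt_deriv r hr := by
    refine (((hasDerivAt_id r).const_mul (2 * q)).mul
      (hasDerivAt_barrierProfile (q + 1) (Ioo_subset_Ico_self hr))).congr_deriv ?_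
    rw [add_assoc q, one_add_one_eq_two, id_eq]
    ring

lemma tendsto_barrierProfile_atTop (hq : 0 < q) (hR : 0 < R) :
    Tendsto (barrierProfile q R) (𝓝[<] R) atTop := by
  refine (tendsto_rpow_neg_nhdsGT_zero (neg_neg_of_pos hq)).comp (tendsto_nhdsWithin_iff.2 ⟨?_, ?_⟩)
  · have hcont : ContinuousAt (fun r ↦ R ^ 2 - r ^ 2) R := by fun_prop
    simpa only [ContinuousAt, sub_self] using hcont.tendsto.mono_left nhdsWithin_le_nhds
  · filter_upwards [Ioo_mem_nhdsLT hR] with r hr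
    exact sq_sub_sq_pos_of_mem_Ico (Ioo_subset_Ico_self hr)

lemma barrierProfile_radial_laplacian_le (ha : 0 ≤ a) (hq : 0 ≤ q) (hr : r ∈ Ioo 0 R) :
    2 * q * (barrierProfile (q + 1) R r + 2 * (q + 1) * r ^ 2 * barrierProfile (q + 2) R r)
        + a / r * (2 * q * r * barrierProfile (q + 1) R r)
      ≤ 2 * q * (a + 3 + 2 * q) * R ^ 2 * barrierProfile (q + 2) R r := by
  have hr' := Ioo_subset_Ico_self hr
  have hr0 : r ≠ 0 := hr.1.ne'
  have hprofile := barrierProfile_pos (q + 2) hr'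
  rw [barrierProfile_eq_mul_add_one (q + 1) hr', add_assoc q, one_add_one_eq_two]
  calc
    _ = 2 * q * barrierProfile (q + 2) R r
          * ((a + 1) * (R ^ 2 - r ^ 2) + 2 * (q + 1) * r ^ 2) := by field_simp; ring
    _ ≤ 2 * q * barrierProfile (q + 2) R r * ((a + 1) * R ^ 2 + 2 * (q + 1) * R ^ 2) := by
      gcongr <;> linarith [sq_nonneg r, hr.1, hr.2]
    _ = 2 * q * (a + 3 + 2 * q) * R ^ 2 * barrierProfile (q + 2) R r := by ring

end barrierProfile

/-- The constant `K` of the Keller–Osserman bound `v 0 ≤ K * R ^ (-2 / ε)` for subsolutions of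
`v'' + a / r * v' = δ * v ^ (1 + ε)`. The choice `δ * K ^ ε = 2 * p * (a + 3 + 2 * p)` with
`p = 2 / ε` makes the barrier a supersolution. -/
noncomputable def kellerOssermanConst (a δ ε : ℝ) : ℝ :=
  (2 * (2 / ε) * (a + 3 + 2 * (2 / ε)) / δ) ^ ε⁻¹

/-- The factor in front of `(R² - r²)^(-2/ε)` in the Keller–Osserman barrier, normalised so that the
barrier takes the value `kellerOssermanConst a δ ε * R ^ (-2 / ε)` at the centre. -/
noncomputable def barrierCoeff (a δ ε R : ℝ) : ℝ := kellerOssermanConst a δ ε * R ^ (2 / ε)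

section KellerOsserman

variable {a δ ε R r : ℝ} {v v' v'' : ℝ → ℝ}

lemma kellerOssermanConst_pos (ha : 0 ≤ a) (hδ : 0 < δ) (hε : 0 < ε) :
    0 < kellerOssermanConst a δ ε := by
  unfold kellerOssermanConst
  positivity

lemma barrierCoeff_pos (ha : 0 ≤ a) (hδ : 0 < δ) (hε : 0 < ε) (hR : 0 < R) :
    0 < barrierCoeff a δ ε R :=
  mul_pos (kellerOssermanConst_pos ha hδ hε) (Real.rpow_pos_of_pos hR _)

lemma barrierCoeff_rpow (ha : 0 ≤ a) (hδ : 0 < δ) (hε : 0 < ε) (hR : 0 < R) :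
    barrierCoeff a δ ε R ^ ε = 2 * (2 / ε) * (a + 3 + 2 * (2 / ε)) / δ * R ^ 2 := by
  rw [barrierCoeff, Real.mul_rpow (kellerOssermanConst_pos ha hδ hε).le (by positivity),
    kellerOssermanConst, Real.rpow_inv_rpow (by positivity) hε.ne', ← Real.rpow_mul hR.le,
    div_mul_cancel₀ 2 hε.ne', Real.rpow_two]

lemma barrierCoeff_mul_barrierProfile_zero (hR : 0 < R) :
    barrierCoeff a δ ε R * barrierProfile (2 / ε) R 0
      = kellerOssermanConst a δ ε * R ^ (-(2 / ε)) := by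
  rw [barrierCoeff, barrierProfile_zero_right _ hR.le, mul_assoc, ← Real.rpow_add hR]
  ring_nf

lemma mul_barrier_rpow_one_add (ha : 0 ≤ a) (hδ : 0 < δ) (hε : 0 < ε) (hr : r ∈ Ioo 0 R) :
    δ * (barrierCoeff a δ ε R * barrierProfile (2 / ε) R r) ^ (1 + ε)
      = barrierCoeff a δ ε R * (2 * (2 / ε) * (a + 3 + 2 * (2 / ε)) * R ^ 2
        * barrierProfile (2 / ε + 2) R r) := by
  have hr' := Ioo_subset_Ico_self hr
  have hR : 0 < R := hr.1.trans hr.2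
  have hcoeff := barrierCoeff_pos ha hδ hε hR
  have hexponent : 2 / ε * (1 + ε) = 2 / ε + 2 := by field_simp
  rw [Real.mul_rpow hcoeff.le (barrierProfile_pos _ hr').le, barrierProfile_rpow _ _ hr',
    hexponent, Real.rpow_one_add' hcoeff.le (by positivity), barrierCoeff_rpow ha hδ hε hR]
  field_simp

lemma barrier_radial_laplacian_le (ha : 0 ≤ a) (hδ : 0 < δ) (hε : 0 < ε) (hr : r ∈ Ioo 0 R) :
    barrierCoeff a δ ε R * (2 * (2 / ε) * (barrierProfile (2 / ε + 1) R r
          + 2 * (2 / ε + 1) * r ^ 2 * barrierProfile (2 / ε + 2) R r))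
        + a / r * (barrierCoeff a δ ε R * (2 * (2 / ε) * r * barrierProfile (2 / ε + 1) R r))
      ≤ δ * (barrierCoeff a δ ε R * barrierProfile (2 / ε) R r) ^ (1 + ε) := by
  have hcoeff := barrierCoeff_pos ha hδ hε (hr.1.trans hr.2)
  rw [mul_barrier_rpow_one_add ha hδ hε hr, mul_left_comm (a / r), ← mul_add]
  exact mul_le_mul_of_nonneg_left (barrierProfile_radial_laplacian_le ha (by positivity) hr)
    hcoeff.le

lemma apply_zero_le_kellerOsserman_of_mem_Ioo {ρ : ℝ} (ha : 0 ≤ a) (hδ : 0 < δ) (hε : 0 < ε)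
    (hv : HasRadialDerivs v v' v'' R) (hv'0 : 0 ≤ v' 0)
    (hv_sub : ∀ r ∈ Ioo 0 R, 0 ≤ v r → δ * v r ^ (1 + ε) ≤ v'' r + a / r * v' r)
    (hρ : ρ ∈ Ioo 0 R) :
    v 0 ≤ kellerOssermanConst a δ ε * ρ ^ (-(2 / ε)) := by
  by_contra! hlt
  rw [← barrierCoeff_mul_barrierProfile_zero hρ.1] at hlt
  have hp : 0 < 2 / ε := by positivity
  have hcoeff := barrierCoeff_pos ha hδ hε hρ.1
  have hG : MonotoneOn (fun x : ℝ ↦ δ * x ^ (1 + ε)) (Ici 0) := fun x hx y _ hxy ↦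
    mul_le_mul_of_nonneg_left (Real.rpow_le_rpow hx hxy (by positivity)) hδ.le
  have hw := (hasRadialDerivs_barrierProfile (2 / ε) ρ).const_mul (barrierCoeff a δ ε ρ)
  have hgap := (hv.mono hρ.2.le).sub_apply_zero_le_of_subsolution_of_supersolution hw ha hG
    (fun r hr ↦ (mul_pos hcoeff (barrierProfile_pos _ (Ioo_subset_Ico_self hr))).le)
    (fun r hr ↦ hv_sub r (Ioo_subset_Ioo_right hρ.2.le hr))
    (fun r hr ↦ barrier_radial_laplacian_le ha hδ hε hr) hlt (by simpa using hv'0)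
  have hv_lim : Tendsto v (𝓝[<] ρ) (𝓝 (v ρ)) :=
    (hv.hasDerivAt ρ hρ).continuousAt.tendsto.mono_left nhdsWithin_le_nhds
  have hw_lim := (tendsto_barrierProfile_atTop hp hρ.1).const_mul_atTop hcoeff
  have hr_mem : ∀ᶠ r in 𝓝[<] ρ, r ∈ Ioo 0 ρ := Ioo_mem_nhdsLT hρ.1
  obtain ⟨r, hr, hvr, hwr⟩ := (hr_mem.and
    ((hv_lim.eventually_lt_const (lt_add_one (v ρ))).and
      (hw_lim.eventually_ge_atTop (v ρ + 1)))).exists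
  linarith [hgap r (Ioo_subset_Ico_self hr)]

end KellerOsserman

lemma le_of_le_abs_of_monotone {F : ℝ → ℝ} (hF : Monotone F) (hF0 : F 0 = 0) {x y : ℝ}
    (hx : 0 ≤ x) (h : y ≤ |F x|) : y ≤ F x :=
  abs_of_nonneg (hF0 ▸ hF hx) ▸ h

theorem stmt_3_general {a δ ε R : ℝ} {v v' v'' : ℝ → ℝ}
    (ha : 0 ≤ a) (hδ : 0 < δ) (hε : 0 < ε) (hR : 0 < R)
    (hv : HasRadialDerivs v v' v'' R) (hv'0 : 0 ≤ v' 0)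
    (hv_sub : ∀ r ∈ Ioo 0 R, 0 ≤ v r → δ * v r ^ (1 + ε) ≤ v'' r + a / r * v' r) :
    v 0 ≤ kellerOssermanConst a δ ε * R ^ (-(2 / ε)) := by
  have hlim : Tendsto (fun ρ : ℝ ↦ kellerOssermanConst a δ ε * ρ ^ (-(2 / ε))) (𝓝[<] R)
      (𝓝 (kellerOssermanConst a δ ε * R ^ (-(2 / ε)))) :=
    (((Real.continuousAt_rpow_const R _ (Or.inl hR.ne')).const_mul _).tendsto).mono_left
      nhdsWithin_le_nhds
  refine ge_of_tendsto hlim ?_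
  filter_upwards [Ioo_mem_nhdsLT hR] with ρ hρ
  exact apply_zero_le_kellerOsserman_of_mem_Ioo ha hδ hε hv hv'0 hv_sub hρ

theorem stmt_3 (n : ℕ) (hn : 2 ≤ n)
    (F : ℝ → ℝ) (δ ε : ℝ) (hδ : 0 < δ) (hε : 0 < ε)
    (hF : ContDiff ℝ 2 F) (hF0 : F 0 = 0)
    (hFmono : ∀ μ : ℝ, 0 ≤ deriv F μ)
    (hFgrow : ∀ μ : ℝ, δ * |μ| ^ (1 + ε) ≤ |F μ|) :
    ∃ C : ℝ, 0 < C ∧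
      ∀ v v' v'' : ℝ → ℝ,
        (∀ r ∈ Icc (0:ℝ) 1, HasDerivWithinAt v (v' r) (Icc (0:ℝ) 1) r) →
        ContinuousOn v' (Icc (0:ℝ) 1) →
        (∀ r ∈ Ioo (0:ℝ) 1, HasDerivAt v' (v'' r) r) →
        ContinuousOn v'' (Ioo (0:ℝ) 1) →
        v' 0 = 0 →
        (∀ r ∈ Ioo (0:ℝ) 1, v'' r + (((n : ℝ) - 1) / r) * v' r = F (v r)) →
        (∀ r ∈ Icc (0:ℝ) 1, 0 ≤ v r) →
        (∀ r ∈ Icc (0:ℝ) 1, 0 ≤ v' r) →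
        v 0 ≤ C := by
  have ha : (0 : ℝ) ≤ n - 1 := sub_nonneg.2 (mod_cast one_le_two.trans hn)
  have hF_monotone : Monotone F :=
    monotone_of_deriv_nonneg (hF.differentiable two_ne_zero) hFmono
  refine ⟨kellerOssermanConst (n - 1) δ ε, kellerOssermanConst_pos ha hδ hε, ?_⟩
  intro v v' v'' hv hv'_cont hv' _ hv'0 hode _ _
  have hv_sub : ∀ r ∈ Ioo (0 : ℝ) 1, 0 ≤ v r →
      δ * v r ^ (1 + ε) ≤ v'' r + ((n : ℝ) - 1) / r * v' r := fun r hr hvr ↦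
    hode r hr ▸ le_of_le_abs_of_monotone hF_monotone hF0 hvr
      (by simpa only [abs_of_nonneg hvr] using hFgrow (v r))
  simpa using stmt_3_general ha hδ hε one_pos (.of_hasDerivWithinAt_Icc hv hv'_cont hv')
    hv'0.ge hv_sub
end

section
/- Let n ≥ 2 be an integer and let F : ℝ → ℝ be continuous and nondecreasing with F(0) = 0. Let v : [0,1] → ℝ be continuously differentiable on [0,1] and twice continuously differentiable on (0,1), with v'(0) = 0, v''(r) + ((n−1)/r) v'(r) = F(v(r)) for all r ∈ (0,1), v(r) ≥ 0 for all r ∈ [0,1], and v'(r) ≥ 0 for all r ∈ [0,1]. Then for every r ∈ (0,1) one has 0 ≤ v'(r) ≤ √2 · √(v(r)) · √(F(v(r))). -/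
open Set

/-!
If the acceleration `v''` is at most a constant `c` while `v' ≥ 0`, the energy `v' ^ 2 - 2 * c * v`
does not increase. On `[a, r]` the friction term only lowers the acceleration and `v` is
nondecreasing, so `c = F (v r)` is such a constant; as `v' a = 0`, comparing the energy at `a` and
at `r` gives `v' r ^ 2 ≤ 2 * F (v r) * (v r - v a)`. Freezing `F` at its largest value replaces the
primitive `G` of `F` and the bound `G μ ≤ μ * F μ`.
-/

section

variable {v v' v'' : ℝ → ℝ} {a b : ℝ}

theorem antitoneOn_sq_deriv_sub_of_secondDeriv_le {c : ℝ}
    (hv : ContinuousOn v (Icc a b)) (hv' : ContinuousOn v' (Icc a b))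
    (hderiv : ∀ s ∈ Ioo a b, HasDerivAt v (v' s) s)
    (hderiv' : ∀ s ∈ Ioo a b, HasDerivAt v' (v'' s) s)
    (hv'_nonneg : ∀ s ∈ Ioo a b, 0 ≤ v' s) (hv''_le : ∀ s ∈ Ioo a b, v'' s ≤ c) :
    AntitoneOn (fun s ↦ v' s ^ 2 - 2 * c * v s) (Icc a b) := by
  have hderiv_energy : ∀ s ∈ Ioo a b,
      HasDerivAt (fun s ↦ v' s ^ 2 - 2 * c * v s) (2 * v' s * (v'' s - c)) s := fun s hs ↦
    (((hderiv' s hs).pow 2).sub ((hderiv s hs).const_mul (2 * c))).congr_deriv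
      (by push_cast; ring)
  rw [← interior_Icc] at hderiv_energy
  refine antitoneOn_of_hasDerivWithinAt_nonpos (convex_Icc a b)
    ((hv'.pow 2).sub (continuousOn_const.mul hv))
    (fun s hs ↦ (hderiv_energy s hs).hasDerivWithinAt) fun s hs ↦ ?_
  rw [interior_Icc] at hs
  exact mul_nonpos_of_nonneg_of_nonpos (mul_nonneg zero_le_two (hv'_nonneg s hs))
    (sub_nonpos.2 (hv''_le s hs))

theorem sq_deriv_le_of_secondDeriv_le {c : ℝ} (hab : a ≤ b)
    (hv : ContinuousOn v (Icc a b)) (hv' : ContinuousOn v' (Icc a b))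
    (hderiv : ∀ s ∈ Ioo a b, HasDerivAt v (v' s) s)
    (hderiv' : ∀ s ∈ Ioo a b, HasDerivAt v' (v'' s) s)
    (hv'_nonneg : ∀ s ∈ Ioo a b, 0 ≤ v' s) (hv''_le : ∀ s ∈ Ioo a b, v'' s ≤ c) :
    v' b ^ 2 ≤ v' a ^ 2 + 2 * c * (v b - v a) := by
  have henergy : v' b ^ 2 - 2 * c * v b ≤ v' a ^ 2 - 2 * c * v a :=
    antitoneOn_sq_deriv_sub_of_secondDeriv_le hv hv' hderiv hderiv' hv'_nonneg hv''_le
      (left_mem_Icc.2 hab) (right_mem_Icc.2 hab) hab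
  linarith

theorem stmt_5_general {F g : ℝ → ℝ} (hF : MonotoneOn F (v '' Icc a b))
    (hderiv : ∀ s ∈ Icc a b, HasDerivWithinAt v (v' s) (Icc a b) s)
    (hv' : ContinuousOn v' (Icc a b))
    (hderiv' : ∀ s ∈ Ioo a b, HasDerivAt v' (v'' s) s)
    (hv'a : v' a = 0) (hg : ∀ s ∈ Ioo a b, 0 ≤ g s)
    (hODE : ∀ s ∈ Ioo a b, v'' s + g s * v' s ≤ F (v s))
    (hva : 0 ≤ v a) (hv'_nonneg : ∀ s ∈ Icc a b, 0 ≤ v' s) :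
    ∀ r ∈ Icc a b, v' r ≤ √2 * √(v r) * √(F (v r)) := by
  intro r hr
  have hIcc : Icc a r ⊆ Icc a b := Icc_subset_Icc_right hr.2
  have hIoo : Ioo a r ⊆ Ioo a b := Ioo_subset_Ioo_right hr.2
  have hIooIcc : Ioo a r ⊆ Icc a b := Ioo_subset_Icc_self.trans hIcc
  have hv : ContinuousOn v (Icc a b) := fun s hs ↦ (hderiv s hs).continuousWithinAt
  have hv_mono : MonotoneOn v (Icc a b) :=
    monotoneOn_of_hasDerivWithinAt_nonneg (convex_Icc a b) hv
      (fun s hs ↦ (hderiv s (interior_subset hs)).mono interior_subset)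
      fun s hs ↦ hv'_nonneg s (interior_subset hs)
  have hv''_le : ∀ s ∈ Ioo a r, v'' s ≤ F (v r) := fun s hs ↦
    calc
      v'' s ≤ v'' s + g s * v' s :=
        le_add_of_nonneg_right (mul_nonneg (hg s (hIoo hs)) (hv'_nonneg s (hIooIcc hs)))
      _ ≤ F (v s) := hODE s (hIoo hs)
      _ ≤ F (v r) := hF (mem_image_of_mem v (hIooIcc hs)) (mem_image_of_mem v hr)
        (hv_mono (hIooIcc hs) hr hs.2.le)
  have hsq : v' r ^ 2 ≤ v' a ^ 2 + 2 * F (v r) * (v r - v a) :=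
    sq_deriv_le_of_secondDeriv_le hr.1 (hv.mono hIcc) (hv'.mono hIcc)
      (fun s hs ↦ (hderiv s (hIooIcc hs)).hasDerivAt (Icc_mem_nhds (hIoo hs).1 (hIoo hs).2))
      (fun s hs ↦ hderiv' s (hIoo hs)) (fun s hs ↦ hv'_nonneg s (hIooIcc hs)) hv''_le
  have hva_le : v a ≤ v r := hv_mono (left_mem_Icc.2 (hr.1.trans hr.2)) hr hr.1
  calc
    v' r ≤ √(2 * (v r - v a) * F (v r)) :=
      Real.le_sqrt_of_sq_le (by rw [hv'a] at hsq; linarith)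
    _ = √2 * √(v r - v a) * √(F (v r)) := by
      rw [Real.sqrt_mul (mul_nonneg zero_le_two (sub_nonneg.2 hva_le)),
        Real.sqrt_mul zero_le_two]
    _ ≤ √2 * √(v r) * √(F (v r)) := by gcongr; exact sub_le_self _ hva

end

theorem stmt_5 (n : ℕ) (hn : 2 ≤ n)
    (F : ℝ → ℝ) (hF : Continuous F) (hFmono : Monotone F) (hF0 : F 0 = 0)
    (v v' v'' : ℝ → ℝ)
    (hderiv1 : ∀ r ∈ Icc (0:ℝ) 1, HasDerivWithinAt v (v' r) (Icc (0:ℝ) 1) r)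
    (hcont1 : ContinuousOn v' (Icc (0:ℝ) 1))
    (hderiv2 : ∀ r ∈ Ioo (0:ℝ) 1, HasDerivAt v' (v'' r) r)
    (hcont2 : ContinuousOn v'' (Ioo (0:ℝ) 1))
    (hv'0 : v' 0 = 0)
    (hODE : ∀ r ∈ Ioo (0:ℝ) 1, v'' r + (((n : ℝ) - 1) / r) * v' r = F (v r))
    (hvpos : ∀ r ∈ Icc (0:ℝ) 1, 0 ≤ v r)
    (hv'pos : ∀ r ∈ Icc (0:ℝ) 1, 0 ≤ v' r) :
    ∀ r ∈ Ioo (0:ℝ) 1,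
      0 ≤ v' r ∧ v' r ≤ Real.sqrt 2 * Real.sqrt (v r) * Real.sqrt (F (v r)) := by
  have hn1 : (0 : ℝ) ≤ n - 1 := sub_nonneg.2 (Nat.one_le_cast.2 (one_le_two.trans hn))
  exact fun r hr ↦ ⟨hv'pos r (Ioo_subset_Icc_self hr),
    stmt_5_general (hFmono.monotoneOn _) hderiv1 hcont1 hderiv2 hv'0
      (fun s hs ↦ div_nonneg hn1 hs.1.le) (fun s hs ↦ (hODE s hs).le)
      (hvpos 0 (left_mem_Icc.2 zero_le_one)) hv'pos r (Ioo_subset_Icc_self hr)⟩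
end

section
/- Let n ≥ 2 be an integer and let F : ℝ → ℝ be continuous with F(μ) ≥ 0 for μ ≥ 0. Let μ₀ > 0 be such that F(μ) ≥ 32 (n−1)² μ for all μ ≥ μ₀. Let v : [0,1] → ℝ be continuously differentiable on [0,1] and twice continuously differentiable on (0,1), satisfying v''(r) + ((n−1)/r) v'(r) = F(v(r)) for all r ∈ (0,1), v(r) ≥ μ₀ for all r ∈ [0,1], and 0 ≤ v'(r) ≤ √2 · √(v(r)) · √(F(v(r))) for all r ∈ (0,1). Then v''(r) ≥ (1/2) F(v(r)) for all r ∈ [1/2, 1). -/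
/-!
By the equation, the claim says that the damping term `((n - 1) / r) * v'` is at most `F (v) / 2`.
For `r ≥ ρ` it is at most `((n - 1) / ρ) √2 √v √(F v)` by the gradient bound, and the growth
hypothesis `8 ((n - 1) / ρ)² v ≤ F v` is exactly the square of `2 ((n - 1) / ρ) √2 √v ≤ √(F v)`.
The constant `32` is the case `ρ = 1/2`.
-/

open Set

theorem mul_sqrt_two_mul_sqrt_mul_sqrt_le_half {a x y : ℝ} (hx : 0 ≤ x)
    (hxy : 8 * a ^ 2 * x ≤ y) : a * (√2 * √x * √y) ≤ 1 / 2 * y := by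
  have hsq : (2 * a * (√2 * √x)) ^ 2 = 8 * a ^ 2 * x := by
    rw [mul_pow, mul_pow √2, Real.sq_sqrt zero_le_two, Real.sq_sqrt hx]
    ring
  have hroot : 2 * a * (√2 * √x) ≤ √y := Real.le_sqrt_of_sq_le (hsq.trans_le hxy)
  have hy : 0 ≤ y := le_trans (by positivity) hxy
  calc a * (√2 * √x * √y) = 1 / 2 * (2 * a * (√2 * √x) * √y) := by ring
    _ ≤ 1 / 2 * (√y * √y) := by gcongr
    _ = 1 / 2 * y := by rw [Real.mul_self_sqrt hy]

theorem div_mul_le_half_of_le_sqrt {c ρ r p x y : ℝ} (hc : 0 ≤ c) (hρ : 0 < ρ) (hr : ρ ≤ r)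
    (hx : 0 ≤ x) (hxy : 8 * (c / ρ) ^ 2 * x ≤ y) (hp : p ≤ √2 * √x * √y) :
    c / r * p ≤ 1 / 2 * y := by
  have hr₀ : 0 < r := hρ.trans_le hr
  calc c / r * p ≤ c / r * (√2 * √x * √y) := by gcongr
    _ ≤ c / ρ * (√2 * √x * √y) := by gcongr
    _ ≤ 1 / 2 * y := mul_sqrt_two_mul_sqrt_mul_sqrt_le_half hx hxy

theorem stmt_6_general {n ρ R μ₀ : ℝ} (hn : 1 ≤ n) (hρ : 0 < ρ) (hμ₀ : 0 ≤ μ₀) {F : ℝ → ℝ}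
    (hFgrow : ∀ μ, μ₀ ≤ μ → 8 * ((n - 1) / ρ) ^ 2 * μ ≤ F μ) {v v' v'' : ℝ → ℝ}
    (hderiv1 : ∀ r ∈ Ico ρ R, HasDerivAt v (v' r) r)
    (hderiv2 : ∀ r ∈ Ico ρ R, HasDerivAt v' (v'' r) r)
    (hODE : ∀ r ∈ Ico ρ R, v'' r + (n - 1) / r * v' r = F (v r))
    (hvμ₀ : ∀ r ∈ Ico ρ R, μ₀ ≤ v r)
    (hv'bound : ∀ r ∈ Ico ρ R, v' r ≤ √2 * √(v r) * √(F (v r))) :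
    ∀ r ∈ Ico ρ R, 1 / 2 * F (v r) ≤ v'' r := by
  intro r hr
  have hdamping : (n - 1) / r * v' r ≤ 1 / 2 * F (v r) :=
    div_mul_le_half_of_le_sqrt (sub_nonneg.2 hn) hρ hr.1 (hμ₀.trans (hvμ₀ r hr))
      (hFgrow _ (hvμ₀ r hr)) (hv'bound r hr)
  linarith [hODE r hr]

theorem stmt_6 (n : ℕ) (hn : 2 ≤ n)
    (F : ℝ → ℝ) (hF : Continuous F)
    (hFnonneg : ∀ μ : ℝ, 0 ≤ μ → 0 ≤ F μ)
    (μ₀ : ℝ) (hμ₀ : 0 < μ₀)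
    (hFgrow : ∀ μ : ℝ, μ₀ ≤ μ → 32 * ((n : ℝ) - 1) ^ 2 * μ ≤ F μ)
    (v v' v'' : ℝ → ℝ)
    (hderiv1 : ∀ r ∈ Icc (0:ℝ) 1, HasDerivWithinAt v (v' r) (Icc (0:ℝ) 1) r)
    (hcont1 : ContinuousOn v' (Icc (0:ℝ) 1))
    (hderiv2 : ∀ r ∈ Ioo (0:ℝ) 1, HasDerivAt v' (v'' r) r)
    (hcont2 : ContinuousOn v'' (Ioo (0:ℝ) 1))
    (hODE : ∀ r ∈ Ioo (0:ℝ) 1, v'' r + (((n : ℝ) - 1) / r) * v' r = F (v r))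
    (hvμ₀ : ∀ r ∈ Icc (0:ℝ) 1, μ₀ ≤ v r)
    (hv'bound : ∀ r ∈ Ioo (0:ℝ) 1,
      0 ≤ v' r ∧ v' r ≤ Real.sqrt 2 * Real.sqrt (v r) * Real.sqrt (F (v r))) :
    ∀ r ∈ Ico (1/2 : ℝ) 1, (1/2 : ℝ) * F (v r) ≤ v'' r := by
  have hIoo : Ico (1/2 : ℝ) 1 ⊆ Ioo 0 1 := Ico_subset_Ioo_left one_half_pos
  exact stmt_6_general (Nat.one_le_cast.2 (one_le_two.trans hn)) one_half_pos hμ₀.le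
    (fun μ hμ ↦ by linarith [hFgrow μ hμ])
    (fun r hr ↦ (hderiv1 r (Ioo_subset_Icc_self (hIoo hr))).hasDerivAt
      (Icc_mem_nhds (hIoo hr).1 (hIoo hr).2))
    (fun r hr ↦ hderiv2 r (hIoo hr)) (fun r hr ↦ hODE r (hIoo hr))
    (fun r hr ↦ hvμ₀ r (Ioo_subset_Icc_self (hIoo hr))) (fun r hr ↦ (hv'bound r (hIoo hr)).2)
end

section
/- Let δ, ε > 0 and let w : [1/2, 1) → ℝ be continuously differentiable on [1/2, 1) and twice continuously differentiable on (1/2, 1), with w(r) > 0 and w'(r) ≥ 0 for all r ∈ [1/2, 1), and w''(r) ≥ (δ/2) w(r)^{1+ε} for all r ∈ (1/2, 1). Then for every r ∈ (1/2, 1) one has w'(r)² ≥ (δ/(2+ε)) ( w(r)^{2+ε} − w(1/2)^{2+ε} ). -/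
open Set

/-!
As for a Newton equation `w'' = f(w)` with `F' = f`, the energy `w'² - 2 F(w)` has derivative
`2 w' (w'' - f(w))`, which is nonnegative when `w' ≥ 0` and `w'' ≥ f(w)`. Comparing the energy at
two points, for `f(y) = (δ/2) y^(1+ε)` and `F(y) = (δ/2) y^(2+ε)/(2+ε)`, gives the inequality.
-/

theorem monotoneOn_sq_deriv_sub_two_mul_comp {s t : Set ℝ} (hs : Convex ℝ s)
    {w w' w'' F f : ℝ → ℝ}
    (hw : ∀ x ∈ s, HasDerivWithinAt w (w' x) s x) (hw'_cont : ContinuousOn w' s)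
    (hw' : ∀ x ∈ interior s, HasDerivAt w' (w'' x) x)
    (hF : ∀ y ∈ t, HasDerivWithinAt F (f y) t y) (hmaps : MapsTo w s t)
    (hw'_nonneg : ∀ x ∈ interior s, 0 ≤ w' x) (hfw : ∀ x ∈ interior s, f (w x) ≤ w'' x) :
    MonotoneOn (fun x ↦ w' x ^ 2 - 2 * F (w x)) s := by
  have hFw : ∀ x ∈ s, HasDerivWithinAt (fun x ↦ F (w x)) (f (w x) * w' x) s x :=
    fun x hx ↦ (hF _ (hmaps hx)).comp x (hw x hx) hmaps
  have hFw_cont : ContinuousOn (fun x ↦ F (w x)) s := fun x hx ↦ (hFw x hx).continuousWithinAt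
  have henergy : ∀ x ∈ interior s, HasDerivWithinAt (fun x ↦ w' x ^ 2 - 2 * F (w x))
      (2 * (w' x * (w'' x - f (w x)))) (interior s) x := by
    intro x hx
    have hFwx := (hFw x (interior_subset hx)).mono interior_subset
    refine (((hw' x hx).hasDerivWithinAt.pow 2).sub (hFwx.const_mul 2)).congr_deriv ?_
    ring
  refine monotoneOn_of_hasDerivWithinAt_nonneg hs
    ((hw'_cont.pow 2).sub (continuousOn_const.mul hFw_cont)) henergy fun x hx ↦ ?_
  exact mul_nonneg zero_le_two (mul_nonneg (hw'_nonneg x hx) (sub_nonneg.2 (hfw x hx)))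

theorem hasDerivAt_mul_rpow_div {c p y : ℝ} (hp : p ≠ 0) (hy : y ≠ 0) :
    HasDerivAt (fun y ↦ c * (y ^ p / p)) (c * y ^ (p - 1)) y := by
  refine (((Real.hasDerivAt_rpow_const (Or.inl hy)).div_const p).const_mul c).congr_deriv ?_
  rw [mul_div_cancel_left₀ _ hp]

theorem stmt_7_general {s : Set ℝ} (hs : Convex ℝ s) {δ ε : ℝ} (hε : 2 + ε ≠ 0)
    {w w' w'' : ℝ → ℝ}
    (hw : ∀ x ∈ s, HasDerivWithinAt w (w' x) s x) (hw'_cont : ContinuousOn w' s)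
    (hw' : ∀ x ∈ interior s, HasDerivAt w' (w'' x) x)
    (hw_pos : ∀ x ∈ s, 0 < w x) (hw'_nonneg : ∀ x ∈ interior s, 0 ≤ w' x)
    (hw'' : ∀ x ∈ interior s, δ / 2 * w x ^ (1 + ε) ≤ w'' x)
    {a r : ℝ} (ha : a ∈ s) (hr : r ∈ s) (har : a ≤ r) :
    w' a ^ 2 + δ / (2 + ε) * (w r ^ (2 + ε) - w a ^ (2 + ε)) ≤ w' r ^ 2 := by
  have hF : ∀ y ∈ Ioi (0 : ℝ), HasDerivWithinAt (fun y ↦ δ / 2 * (y ^ (2 + ε) / (2 + ε)))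
      (δ / 2 * y ^ (1 + ε)) (Ioi 0) y := by
    intro y hy
    rw [show 1 + ε = 2 + ε - 1 by ring]
    exact (hasDerivAt_mul_rpow_div hε (ne_of_gt hy)).hasDerivWithinAt
  have henergy : w' a ^ 2 - 2 * (δ / 2 * (w a ^ (2 + ε) / (2 + ε))) ≤
      w' r ^ 2 - 2 * (δ / 2 * (w r ^ (2 + ε) / (2 + ε))) :=
    monotoneOn_sq_deriv_sub_two_mul_comp hs hw hw'_cont hw' hF hw_pos hw'_nonneg hw'' ha hr har
  calc w' a ^ 2 + δ / (2 + ε) * (w r ^ (2 + ε) - w a ^ (2 + ε))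
      = w' a ^ 2 - 2 * (δ / 2 * (w a ^ (2 + ε) / (2 + ε))) +
          2 * (δ / 2 * (w r ^ (2 + ε) / (2 + ε))) := by ring
    _ ≤ w' r ^ 2 := le_sub_iff_add_le.1 henergy

theorem stmt_7 (δ ε : ℝ) (hδ : 0 < δ) (hε : 0 < ε)
    (w w' w'' : ℝ → ℝ)
    (hderiv1 : ∀ r ∈ Ico (1/2 : ℝ) 1, HasDerivWithinAt w (w' r) (Ico (1/2 : ℝ) 1) r)
    (hcont1 : ContinuousOn w' (Ico (1/2 : ℝ) 1))
    (hderiv2 : ∀ r ∈ Ioo (1/2 : ℝ) 1, HasDerivAt w' (w'' r) r)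
    (hcont2 : ContinuousOn w'' (Ioo (1/2 : ℝ) 1))
    (hwpos : ∀ r ∈ Ico (1/2 : ℝ) 1, 0 < w r)
    (hw'nonneg : ∀ r ∈ Ico (1/2 : ℝ) 1, 0 ≤ w' r)
    (hw'' : ∀ r ∈ Ioo (1/2 : ℝ) 1, (δ / 2) * w r ^ (1 + ε) ≤ w'' r) :
    ∀ r ∈ Ioo (1/2 : ℝ) 1,
      (δ / (2 + ε)) * (w r ^ (2 + ε) - w (1/2 : ℝ) ^ (2 + ε)) ≤ (w' r) ^ 2 := by
  rw [← interior_Ico] at hderiv2 hw''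
  exact fun r hr ↦ (le_add_of_nonneg_left (sq_nonneg _)).trans <|
    stmt_7_general (convex_Ico _ _) (by positivity) hderiv1 hcont1 hderiv2 hwpos
      (fun x hx ↦ hw'nonneg x (interior_subset hx)) hw'' (left_mem_Ico.2 (by norm_num))
      (Ioo_subset_Ico_self hr) hr.1.le
end
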